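/- If for ν-almost every x ∈ Σ the lower local dimension of ν at x is strictly less than h_X, then ν is Q-singular. In particular this holds if the upper Hausdorff dimension dim̄_H(ν) < h_X. -/

import Mathlib

open MeasureTheory ProbabilityTheory Filter Set
open scoped ENNReal

noncomputable section

/-- The one-sided symbolic space over the alphabet `{0, …, b-1}`. -/
abbrev SymbSpace (b : ℕ) : Type := ℕ → Fin b

/-- The cylinder `[w]` of sequences starting with the finite word `w`. -/
def cylinder {b : ℕ} (w : List (Fin b)) : Set (SymbSpace b) :=
  {x | ∀ i : Fin w.length, x i = w.get i}

/-- The prefix `x|_n` of `x` of length `n`, as a finite word. -/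
def wordPrefix {b : ℕ} (x : SymbSpace b) (n : ℕ) : List (Fin b) :=
  List.ofFn (fun i : Fin n => x i)

/-- `Y_w = X_{w_1} X_{w_1w_2} ⋯ X_{w_1⋯w_n}`. -/
def cascadeY {b : ℕ} {Ω : Type*} (X : List (Fin b) → Ω → ℝ) (w : List (Fin b)) (ω : Ω) : ℝ :=
  ∏ k ∈ Finset.range w.length, X (w.take (k + 1)) ω

/-- The total mass `Z_n = ∑_{|u| = n} Y_u ν([u])`. -/
def cascadeZ {b : ℕ} {Ω : Type*} (X : List (Fin b) → Ω → ℝ) (ν : Measure (SymbSpace b))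
    (n : ℕ) (ω : Ω) : ℝ :=
  ∑ u : Fin n → Fin b, cascadeY X (List.ofFn u) ω * (ν (cylinder (List.ofFn u))).toReal

/-- `Z = limsup_n Z_n`. -/
def cascadeZlim {b : ℕ} {Ω : Type*} (X : List (Fin b) → Ω → ℝ) (ν : Measure (SymbSpace b))
    (ω : Ω) : ℝ :=
  Filter.limsup (fun n => cascadeZ X ν n ω) atTop

/-- Assumption (M1): the weights `X_u`, `u` a nonempty finite word, are i.i.d. with common
law that of the nonnegative random variable `X₀` of expectation 1. -/
structure CascadeM1 {b : ℕ} {Ω : Type*} [MeasurableSpace Ω] (P : Measure Ω)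
    (X : List (Fin b) → Ω → ℝ) (X₀ : Ω → ℝ) : Prop where
  meas : ∀ w, Measurable (X w)
  nonneg : ∀ w ω, 0 ≤ X w ω
  meas₀ : Measurable X₀
  nonneg₀ : ∀ ω, 0 ≤ X₀ ω
  mean₀ : ∫ ω, X₀ ω ∂P = 1
  indep : iIndepFun
    (fun w : {w : List (Fin b) // w ≠ []} => X w.1) P
  ident : ∀ w : List (Fin b), w ≠ [] → IdentDistrib (X w) X₀ P P

/-- `h_X = E(X log X) ∈ [0, ∞]` (well defined since `x log x ≥ -e⁻¹` and, by convexity,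
`E(X log X) ≥ E(X) log E(X) = 0`), encoded as an extended nonnegative real. -/
def entropyX {Ω : Type*} [MeasurableSpace Ω] (P : Measure Ω) (X₀ : Ω → ℝ) : ℝ≥0∞ :=
  (∫⁻ ω, ENNReal.ofReal (X₀ ω * Real.log (X₀ ω)) ∂P) -
    (∫⁻ ω, ENNReal.ofReal (-(X₀ ω * Real.log (X₀ ω))) ∂P)

/-- The lower local dimension `liminf_n (-log ν([x|_n]) / n)` of `ν` at `x`, valued
in `[0, ∞]`. -/
def lowerLocalDim {b : ℕ} (ν : Measure (SymbSpace b)) (x : SymbSpace b) : ℝ≥0∞ :=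
  Filter.liminf
    (fun n : ℕ => ENNReal.ofReal (-Real.log ((ν (cylinder (wordPrefix x n))).toReal) / n))
    atTop

/-- The upper local dimension `limsup_n (-log ν([x|_n]) / n)` of `ν` at `x`. -/
def upperLocalDim {b : ℕ} (ν : Measure (SymbSpace b)) (x : SymbSpace b) : ℝ≥0∞ :=
  Filter.limsup
    (fun n : ℕ => ENNReal.ofReal (-Real.log ((ν (cylinder (wordPrefix x n))).toReal) / n))
    atTop

/-- The lower Hausdorff dimension of `ν`: the `ν`-essential infimum of the lower local
dimension. -/
def lowerHausdorffDim {b : ℕ} (ν : Measure (SymbSpace b)) : ℝ≥0∞ :=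
  essInf (lowerLocalDim ν) ν

/-- The upper Hausdorff dimension of `ν`: the `ν`-essential supremum of the lower local
dimension. -/
def upperHausdorffDim {b : ℕ} (ν : Measure (SymbSpace b)) : ℝ≥0∞ :=
  essSup (lowerLocalDim ν) ν

/-- The upper packing dimension of `ν`: the `ν`-essential supremum of the upper local
dimension. -/
def upperPackingDim {b : ℕ} (ν : Measure (SymbSpace b)) : ℝ≥0∞ :=
  essSup (upperLocalDim ν) ν

/-!
On the event that `Z` stays below `K`, each summand gives `Y_{x|n} ≤ K / ν([x|n])`, so for
`α ∈ (0, 1)` the expectation of `Y_{x|n}` restricted to this event is at most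
`(K / ν([x|n])) ^ (1 - α) * E(X ^ α) ^ n`. As `α → 1⁻`, `(1 - E(X ^ α)) / (1 - α)` tends to `h_X`;
hence if the lower local dimension at `x` is below `h_X`, some `α` makes this bound tend to `0`
along a subsequence. The martingale property extends the decay to the full sequence, integration
over `x` gives the decay of the expectation of `Z_n` restricted to the event, and a nonnegative
martingale is almost surely bounded and convergent.
-/

section Entropy

open InformationTheory

/-- A rescaled `α`-divergence generator: the gap in the weighted AM-GM inequality
`x ^ α * 1 ^ (1 - α) ≤ α * x + (1 - α)`, divided by `1 - α`. It approximates `klFun` as `α → 1⁻`. -/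
def powKLFun (α x : ℝ) : ℝ := (α * x + (1 - α) - x ^ α) / (1 - α)

lemma powKLFun_nonneg {α x : ℝ} (hx : 0 ≤ x) (hα₀ : 0 ≤ α) (hα₁ : α ≤ 1) : 0 ≤ powKLFun α x := by
  have amgm := Real.geom_mean_le_arith_mean2_weighted hα₀ (sub_nonneg.2 hα₁) hx zero_le_one
    (by ring)
  rw [Real.one_rpow, mul_one, mul_one] at amgm
  exact div_nonneg (sub_nonneg.2 amgm) (sub_nonneg.2 hα₁)

lemma powKLFun_eq_slope {α : ℝ} (x : ℝ) (hα : α ≠ 1) :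
    powKLFun α x = slope (fun β : ℝ ↦ x ^ β) 1 α + 1 - x := by
  have h₁ : 1 - α ≠ 0 := sub_ne_zero.2 hα.symm
  have h₂ : α - 1 ≠ 0 := sub_ne_zero.2 hα
  rw [powKLFun, slope_def_field, Real.rpow_one]
  field_simp
  ring

lemma tendsto_powKLFun {x : ℝ} (hx : 0 ≤ x) :
    Tendsto (fun α ↦ powKLFun α x) (nhdsWithin 1 (Iio 1)) (nhds (klFun x)) := by
  have slope_tendsto :
      Tendsto (slope (fun β : ℝ ↦ x ^ β) 1) (nhdsWithin 1 (Iio 1)) (nhds (x * Real.log x)) := by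
    rcases hx.eq_or_lt with rfl | hx
    · rw [zero_mul]
      refine tendsto_const_nhds.congr' ?_
      filter_upwards [Ioo_mem_nhdsLT zero_lt_one] with α hα
      simp [slope_def_field, Real.zero_rpow hα.1.ne']
    · have hderiv := (Real.hasStrictDerivAt_const_rpow hx 1).hasDerivAt
      rw [Real.rpow_one] at hderiv
      exact (hasDerivAt_iff_tendsto_slope.1 hderiv).mono_left
        (nhdsWithin_mono 1 fun _ h ↦ (mem_Iio.1 h).ne)
  refine ((slope_tendsto.add_const 1).sub_const x).congr' ?_
  filter_upwards [self_mem_nhdsWithin] with α hα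
  exact (powKLFun_eq_slope x (mem_Iio.1 hα).ne).symm

lemma ofReal_klFun_add {x : ℝ} (hx : 0 ≤ x) :
    ENNReal.ofReal (klFun x) + ENNReal.ofReal (-(x * Real.log x)) + ENNReal.ofReal x =
      ENNReal.ofReal (x * Real.log x) + 1 := by
  have hkl := klFun_nonneg hx
  rcases le_total 0 (x * Real.log x) with h | h
  · rw [ENNReal.ofReal_of_nonpos (neg_nonpos.2 h), add_zero, ← ENNReal.ofReal_add hkl hx,
      ← ENNReal.ofReal_one, ← ENNReal.ofReal_add h zero_le_one, klFun_apply, sub_add_cancel]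
  · rw [ENNReal.ofReal_of_nonpos h, zero_add, ← ENNReal.ofReal_add hkl (neg_nonneg.2 h),
      ← ENNReal.ofReal_add (by linarith) hx, ← ENNReal.ofReal_one, klFun_apply]
    ring_nf

variable {Ω : Type*} [MeasurableSpace Ω] {P : Measure Ω} [IsProbabilityMeasure P] {X₀ : Ω → ℝ}

lemma entropyX_eq_lintegral_klFun (hX : Measurable X₀) (hX₀ : ∀ ω, 0 ≤ X₀ ω)
    (hmean : ∫⁻ ω, ENNReal.ofReal (X₀ ω) ∂P = 1) :
    entropyX P X₀ = ∫⁻ ω, ENNReal.ofReal (klFun (X₀ ω)) ∂P := by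
  have hneg : Measurable fun ω ↦ ENNReal.ofReal (-(X₀ ω * Real.log (X₀ ω))) := by fun_prop
  have hsum : ∫⁻ ω, ENNReal.ofReal (klFun (X₀ ω)) ∂P +
      ∫⁻ ω, ENNReal.ofReal (-(X₀ ω * Real.log (X₀ ω))) ∂P + 1 =
      ∫⁻ ω, ENNReal.ofReal (X₀ ω * Real.log (X₀ ω)) ∂P + 1 := by
    calc _ = ∫⁻ ω, (ENNReal.ofReal (klFun (X₀ ω)) + ENNReal.ofReal (-(X₀ ω * Real.log (X₀ ω))) +
          ENNReal.ofReal (X₀ ω)) ∂P := by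
          rw [lintegral_add_right _ hX.ennreal_ofReal, lintegral_add_right _ hneg, hmean]
      _ = ∫⁻ ω, (ENNReal.ofReal (X₀ ω * Real.log (X₀ ω)) + 1) ∂P :=
          lintegral_congr fun ω ↦ ofReal_klFun_add (hX₀ ω)
      _ = _ := by
          rw [lintegral_add_right _ measurable_const, lintegral_one, measure_univ]
  have hneg_le (ω : Ω) : ENNReal.ofReal (-(X₀ ω * Real.log (X₀ ω))) ≤ 1 := by
    have := klFun_nonneg (hX₀ ω)
    rw [klFun_apply] at this
    exact ENNReal.ofReal_le_one.2 (by linarith [hX₀ ω])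
  have hneg_ne_top : ∫⁻ ω, ENNReal.ofReal (-(X₀ ω * Real.log (X₀ ω))) ∂P ≠ ⊤ :=
    ne_top_of_le_ne_top ENNReal.one_ne_top <| (lintegral_mono hneg_le).trans_eq (by simp)
  rw [entropyX, ← (ENNReal.add_left_inj ENNReal.one_ne_top).1 hsum,
    ENNReal.add_sub_cancel_right hneg_ne_top]

lemma ofReal_mul_lintegral_powKLFun_add (hX : Measurable X₀) (hX₀ : ∀ ω, 0 ≤ X₀ ω)
    (hmean : ∫⁻ ω, ENNReal.ofReal (X₀ ω) ∂P = 1) {α : ℝ} (hα₀ : 0 ≤ α) (hα₁ : α < 1) :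
    ENNReal.ofReal (1 - α) * ∫⁻ ω, ENNReal.ofReal (powKLFun α (X₀ ω)) ∂P +
      ∫⁻ ω, ENNReal.ofReal (X₀ ω ^ α) ∂P = 1 := by
  have hβ : 0 < 1 - α := sub_pos.2 hα₁
  have pointwise (ω : Ω) : ENNReal.ofReal (1 - α) * ENNReal.ofReal (powKLFun α (X₀ ω)) +
      ENNReal.ofReal (X₀ ω ^ α) =
      ENNReal.ofReal α * ENNReal.ofReal (X₀ ω) + ENNReal.ofReal (1 - α) := by
    have hkl := powKLFun_nonneg (hX₀ ω) hα₀ hα₁.le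
    rw [← ENNReal.ofReal_mul hβ.le, ← ENNReal.ofReal_mul hα₀,
      ← ENNReal.ofReal_add (mul_nonneg hβ.le hkl) (Real.rpow_nonneg (hX₀ ω) α),
      ← ENNReal.ofReal_add (mul_nonneg hα₀ (hX₀ ω)) hβ.le, powKLFun, mul_div_cancel₀ _ hβ.ne',
      sub_add_cancel]
  rw [← lintegral_const_mul' _ _ ENNReal.ofReal_ne_top,
    ← lintegral_add_right _ (by fun_prop : Measurable fun ω ↦ ENNReal.ofReal (X₀ ω ^ α)),
    lintegral_congr pointwise, lintegral_add_right _ measurable_const,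
    lintegral_const_mul' _ _ ENNReal.ofReal_ne_top, hmean, lintegral_const, measure_univ,
    mul_one, mul_one, ← ENNReal.ofReal_add hα₀ hβ.le, add_sub_cancel, ENNReal.ofReal_one]

lemma exists_lintegral_rpow_lt_exp (hX : Measurable X₀) (hX₀ : ∀ ω, 0 ≤ X₀ ω)
    (hmean : ∫⁻ ω, ENNReal.ofReal (X₀ ω) ∂P = 1) {a : NNReal} (ha : a < entropyX P X₀) :
    ∃ α : ℝ, 0 < α ∧ α < 1 ∧
      ∫⁻ ω, ENNReal.ofReal (X₀ ω ^ α) ∂P < ENNReal.ofReal (Real.exp (-((1 - α) * a))) := by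
  have fatou : entropyX P X₀ ≤
      liminf (fun α ↦ ∫⁻ ω, ENNReal.ofReal (powKLFun α (X₀ ω)) ∂P) (nhdsWithin 1 (Iio 1)) := by
    rw [entropyX_eq_lintegral_klFun hX hX₀ hmean]
    refine (lintegral_congr fun ω ↦ ?_).trans_le (lintegral_liminf_le fun α ↦ ?_)
    · exact (ENNReal.tendsto_ofReal (tendsto_powKLFun (hX₀ ω))).liminf_eq.symm
    · unfold powKLFun
      fun_prop
  obtain ⟨α, ha_lt, hα₀, hα₁⟩ := ((eventually_lt_of_lt_liminf (ha.trans_le fatou)).and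
    (Ioo_mem_nhdsLT zero_lt_one)).exists
  refine ⟨α, hα₀, hα₁, ?_⟩
  have hβ : 0 < 1 - α := sub_pos.2 hα₁
  have hsum := ofReal_mul_lintegral_powKLFun_add hX hX₀ hmean hα₀.le hα₁
  have hmoment_ne_top : ∫⁻ ω, ENNReal.ofReal (X₀ ω ^ α) ∂P ≠ ⊤ :=
    ne_top_of_le_ne_top ENNReal.one_ne_top (le_add_self.trans_eq hsum)
  have hlt : ENNReal.ofReal (1 - α) * a + ∫⁻ ω, ENNReal.ofReal (X₀ ω ^ α) ∂P < 1 :=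
    (ENNReal.add_lt_add_right hmoment_ne_top <| ENNReal.mul_lt_mul_right
      (ENNReal.ofReal_pos.2 hβ).ne' ENNReal.ofReal_ne_top ha_lt).trans_eq hsum
  calc _ < 1 - ENNReal.ofReal (1 - α) * a := lt_tsub_iff_left.2 hlt
    _ = ENNReal.ofReal (1 - (1 - α) * a) := by
        rw [ENNReal.ofReal_sub 1 (mul_nonneg hβ.le a.coe_nonneg), ENNReal.ofReal_one,
          ENNReal.ofReal_mul hβ.le, ENNReal.ofReal_coe_nnreal]
    _ ≤ _ := ENNReal.ofReal_le_ofReal (Real.one_sub_le_exp_neg _)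

end Entropy

section Words

variable {b : ℕ}

lemma length_wordPrefix (x : SymbSpace b) (n : ℕ) : (wordPrefix x n).length = n :=
  List.length_ofFn

lemma wordPrefix_succ_ne_nil (x : SymbSpace b) (n : ℕ) : wordPrefix x (n + 1) ≠ [] :=
  List.ne_nil_of_length_eq_add_one (length_wordPrefix x (n + 1))

lemma take_wordPrefix (x : SymbSpace b) {k n : ℕ} (h : k ≤ n) :
    (wordPrefix x n).take k = wordPrefix x k :=
  List.ext_getElem (by simp [wordPrefix, h]) fun i _ _ ↦ by simp [wordPrefix]

lemma cylinder_ofFn {n : ℕ} (u : Fin n → Fin b) :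
    cylinder (List.ofFn u) = {x : SymbSpace b | wordPrefix x n = List.ofFn u} := by
  ext x
  simp only [_root_.cylinder, wordPrefix, Set.mem_ofPred_eq, List.ofFn_inj, funext_iff,
    List.get_ofFn]
  exact (finCongr List.length_ofFn).forall_congr fun _ ↦ Iff.rfl

lemma lintegral_comp_wordPrefix (ν : Measure (SymbSpace b)) (n : ℕ) (g : List (Fin b) → ℝ≥0∞) :
    ∫⁻ x, g (wordPrefix x n) ∂ν =
      ∑ u : Fin n → Fin b, g (List.ofFn u) * ν (cylinder (List.ofFn u)) := by
  have hrestr : Measurable fun (x : SymbSpace b) (i : Fin n) ↦ x i := by fun_prop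
  calc ∫⁻ x, g (wordPrefix x n) ∂ν
      = ∫⁻ u : Fin n → Fin b, g (List.ofFn u)
          ∂(ν.map fun (x : SymbSpace b) (i : Fin n) ↦ x i) :=
        (lintegral_map (f := fun u : Fin n → Fin b ↦ g (List.ofFn u))
          (measurable_of_countable _) hrestr).symm
    _ = _ := by
        rw [lintegral_fintype]
        refine Finset.sum_congr rfl fun u _ ↦ ?_
        rw [Measure.map_apply hrestr (measurableSet_singleton u), cylinder_ofFn]
        simp [wordPrefix, preimage]

lemma measurable_comp_wordPrefix {α : Type*} [MeasurableSpace α] (g : List (Fin b) → α) (n : ℕ) :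
    Measurable fun x : SymbSpace b ↦ g (wordPrefix x n) :=
  (measurable_of_countable fun u : Fin n → Fin b ↦ g (List.ofFn u)).comp
    (by fun_prop : Measurable fun (x : SymbSpace b) (i : Fin n) ↦ x i)

lemma ae_measure_cylinder_wordPrefix_ne_zero (ν : Measure (SymbSpace b)) :
    ∀ᵐ x ∂ν, ∀ n, ν (cylinder (wordPrefix x n)) ≠ 0 := by
  refine ae_all_iff.2 fun n ↦ ?_
  have hnull : ν (⋃ u ∈ {u : Fin n → Fin b | ν (cylinder (List.ofFn u)) = 0},
      cylinder (List.ofFn u)) = 0 :=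
    (measure_biUnion_null_iff (Set.to_countable _)).2 fun _ hu ↦ hu
  refine measure_mono_null (fun x hx ↦ ?_) hnull
  refine mem_biUnion (x := fun i : Fin n ↦ x i) (not_not.1 hx) ?_
  rw [cylinder_ofFn]
  rfl

lemma frequently_exp_lt_measure_cylinder {ν : Measure (SymbSpace b)} [IsFiniteMeasure ν]
    {x : SymbSpace b} (hν : ∀ n, ν (cylinder (wordPrefix x n)) ≠ 0) {a : NNReal}
    (hx : lowerLocalDim ν x < a) :
    ∃ᶠ n : ℕ in atTop, Real.exp (-(n * a)) < (ν (cylinder (wordPrefix x n))).toReal := by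
  refine ((frequently_lt_of_liminf_lt (by isBoundedDefault) hx).and_eventually
    (eventually_gt_atTop 0)).mono fun n ⟨hlt, hn⟩ ↦ ?_
  rw [← ENNReal.ofReal_coe_nnreal] at hlt
  have hlog := (div_lt_iff₀ (Nat.cast_pos.2 hn)).1 (ENNReal.ofReal_lt_ofReal_iff'.1 hlt).1
  rw [← Real.lt_log_iff_exp_lt (ENNReal.toReal_pos (hν n) (measure_ne_top _ _))]
  linarith

end Words

section Cascade

variable {b : ℕ} {Ω : Type*} {X : List (Fin b) → Ω → ℝ}

lemma cascadeY_wordPrefix (X : List (Fin b) → Ω → ℝ) (x : SymbSpace b) (n : ℕ) (ω : Ω) :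
    cascadeY X (wordPrefix x n) ω = ∏ k ∈ Finset.range n, X (wordPrefix x (k + 1)) ω := by
  rw [cascadeY, length_wordPrefix]
  exact Finset.prod_congr rfl fun k hk ↦ by rw [take_wordPrefix x (Finset.mem_range.1 hk)]

lemma cascadeY_wordPrefix_succ (X : List (Fin b) → Ω → ℝ) (x : SymbSpace b) (n : ℕ) (ω : Ω) :
    cascadeY X (wordPrefix x (n + 1)) ω =
      cascadeY X (wordPrefix x n) ω * X (wordPrefix x (n + 1)) ω := by
  rw [cascadeY_wordPrefix, cascadeY_wordPrefix, Finset.prod_range_succ]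

lemma cascadeY_nonneg (hX₀ : ∀ w ω, 0 ≤ X w ω) (w : List (Fin b)) (ω : Ω) :
    0 ≤ cascadeY X w ω :=
  Finset.prod_nonneg fun _ _ ↦ hX₀ _ _

lemma cascadeZ_nonneg (hX₀ : ∀ w ω, 0 ≤ X w ω) (ν : Measure (SymbSpace b)) (n : ℕ) (ω : Ω) :
    0 ≤ cascadeZ X ν n ω :=
  Finset.sum_nonneg fun _ _ ↦ mul_nonneg (cascadeY_nonneg hX₀ _ _) ENNReal.toReal_nonneg

lemma cascadeY_mul_measure_le_cascadeZ (hX₀ : ∀ w ω, 0 ≤ X w ω) (ν : Measure (SymbSpace b))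
    (x : SymbSpace b) (n : ℕ) (ω : Ω) :
    cascadeY X (wordPrefix x n) ω * (ν (cylinder (wordPrefix x n))).toReal ≤ cascadeZ X ν n ω :=
  Finset.single_le_sum (f := fun u : Fin n → Fin b ↦
    cascadeY X (List.ofFn u) ω * (ν (cylinder (List.ofFn u))).toReal)
    (fun _ _ ↦ mul_nonneg (cascadeY_nonneg hX₀ _ _) ENNReal.toReal_nonneg)
    (Finset.mem_univ fun i : Fin n ↦ x i)

lemma measurable_cascadeY {m : MeasurableSpace Ω} {w : List (Fin b)}
    (hX : ∀ v ≠ [], v.length ≤ w.length → Measurable (X v)) : Measurable (cascadeY X w) := by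
  refine Finset.measurable_fun_prod _ fun k hk ↦ hX _ ?_ (List.length_take_le' _ _)
  have hw : w ≠ [] := List.ne_nil_of_length_pos ((Nat.zero_le k).trans_lt (Finset.mem_range.1 hk))
  simpa using hw

lemma measurable_cascadeZ {m : MeasurableSpace Ω} (ν : Measure (SymbSpace b)) {n : ℕ}
    (hX : ∀ v ≠ [], v.length ≤ n → Measurable (X v)) : Measurable (cascadeZ X ν n) :=
  Finset.measurable_fun_sum _ fun _ _ ↦
    (measurable_cascadeY (by simpa only [List.length_ofFn] using hX)).mul_const _

variable [MeasurableSpace Ω] {μ : Measure Ω}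

lemma lintegral_cascadeZ (hX : ∀ w, Measurable (X w)) (hX₀ : ∀ w ω, 0 ≤ X w ω)
    (ν : Measure (SymbSpace b)) [IsFiniteMeasure ν] (n : ℕ) :
    ∫⁻ ω, ENNReal.ofReal (cascadeZ X ν n ω) ∂μ =
      ∫⁻ x, ∫⁻ ω, ENNReal.ofReal (cascadeY X (wordPrefix x n) ω) ∂μ ∂ν := by
  have hY (w : List (Fin b)) : Measurable fun ω ↦ ENNReal.ofReal (cascadeY X w ω) :=
    (measurable_cascadeY fun v _ _ ↦ hX v).ennreal_ofReal
  have hZ (ω : Ω) : ENNReal.ofReal (cascadeZ X ν n ω) = ∑ u : Fin n → Fin b,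
      ENNReal.ofReal (cascadeY X (List.ofFn u) ω) * ν (cylinder (List.ofFn u)) := by
    rw [cascadeZ, ENNReal.ofReal_sum_of_nonneg
      fun _ _ ↦ mul_nonneg (cascadeY_nonneg hX₀ _ _) ENNReal.toReal_nonneg]
    refine Finset.sum_congr rfl fun u _ ↦ ?_
    rw [ENNReal.ofReal_mul (cascadeY_nonneg hX₀ _ _), ENNReal.ofReal_toReal (measure_ne_top _ _)]
  rw [lintegral_comp_wordPrefix ν n fun w ↦ ∫⁻ ω, ENNReal.ofReal (cascadeY X w ω) ∂μ,
    lintegral_congr hZ, lintegral_finsetSum _ fun u _ ↦ (hY _).mul_const _]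
  exact Finset.sum_congr rfl fun u _ ↦ lintegral_mul_const _ (hY _)

/-- The filtration of the cascade: level `n` is generated by the weights of the nonempty words of
length at most `n`. The weight of the empty word, which (M1) does not constrain, is left out. -/
def cascadeFiltration {mΩ : MeasurableSpace Ω} (hX : ∀ w, Measurable (X w)) : Filtration ℕ mΩ where
  seq n := ⨆ w ∈ {w : {w : List (Fin b) // w ≠ []} | w.1.length ≤ n},
    MeasurableSpace.comap (X w.1) inferInstance
  mono' _ _ hij := biSup_mono fun _ hw ↦ le_trans hw hij
  le' _ := iSup₂_le fun w _ ↦ (hX w.1).comap_le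

lemma measurable_cascadeFiltration (hX : ∀ w, Measurable (X w)) {w : List (Fin b)} (hw : w ≠ [])
    {n : ℕ} (hn : w.length ≤ n) : Measurable[cascadeFiltration hX n] (X w) :=
  Measurable.of_comap_le <| le_iSup₂_of_le (f := fun (w : {w : List (Fin b) // w ≠ []})
    (_ : w ∈ {w : {w : List (Fin b) // w ≠ []} | w.1.length ≤ n}) ↦
      MeasurableSpace.comap (X w.1) inferInstance) ⟨w, hw⟩ hn le_rfl

end Cascade

namespace CascadeM1

variable {b : ℕ} {Ω : Type*} [MeasurableSpace Ω] {P : Measure Ω}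
  {X : List (Fin b) → Ω → ℝ} {X₀ : Ω → ℝ}

lemma lintegral_ofReal_eq_one (hM : CascadeM1 P X X₀) : ∫⁻ ω, ENNReal.ofReal (X₀ ω) ∂P = 1 := by
  have hint : Integrable X₀ P := .of_integral_ne_zero (hM.mean₀ ▸ one_ne_zero)
  rw [← ofReal_integral_eq_lintegral_ofReal hint (ae_of_all _ hM.nonneg₀), hM.mean₀,
    ENNReal.ofReal_one]

lemma indep_cascadeFiltration (hM : CascadeM1 P X X₀) {w : List (Fin b)} {n : ℕ}
    (hw : n < w.length) :
    Indep (cascadeFiltration hM.meas n) (MeasurableSpace.comap (X w) inferInstance) P := by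
  have hne : w ≠ [] := List.ne_nil_of_length_pos ((Nat.zero_le n).trans_lt hw)
  have hdisj : Disjoint {v : {v : List (Fin b) // v ≠ []} | v.1.length ≤ n} {⟨w, hne⟩} :=
    Set.disjoint_singleton_right.2 hw.not_ge
  simpa only [iSup_singleton, cascadeFiltration] using
    indep_iSup_of_disjoint (fun v : {v : List (Fin b) // v ≠ []} ↦ (hM.meas v.1).comap_le)
      hM.indep hdisj

lemma lintegral_prod_wordPrefix (hM : CascadeM1 P X X₀) {f : ℝ → ℝ≥0∞} (hf : Measurable f)
    (x : SymbSpace b) (n : ℕ) :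
    ∫⁻ ω, ∏ k ∈ Finset.range n, f (X (wordPrefix x (k + 1)) ω) ∂P =
      (∫⁻ ω, f (X₀ ω) ∂P) ^ n := by
  have hinj : Function.Injective fun k : ℕ ↦
      (⟨wordPrefix x (k + 1), wordPrefix_succ_ne_nil x k⟩ : {w : List (Fin b) // w ≠ []}) :=
    fun i j hij ↦ by simpa [length_wordPrefix] using congrArg (fun w ↦ w.1.length) hij
  have hindep := (hM.indep.precomp hinj).comp (fun _ ↦ f) fun _ ↦ hf
  calc _ = ∏ k ∈ Finset.range n, ∫⁻ ω, f (X (wordPrefix x (k + 1)) ω) ∂P :=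
        lintegral_prod_eq_prod_lintegral_of_indepFun _ _ hindep fun _ ↦ hf.comp (hM.meas _)
    _ = ∏ _k ∈ Finset.range n, ∫⁻ ω, f (X₀ ω) ∂P := Finset.prod_congr rfl fun k _ ↦
        ((hM.ident _ (wordPrefix_succ_ne_nil x k)).comp hf).lintegral_eq
    _ = _ := by rw [Finset.prod_const, Finset.card_range]

lemma lintegral_cascadeY_rpow (hM : CascadeM1 P X X₀) (x : SymbSpace b) (n : ℕ) (α : ℝ) :
    ∫⁻ ω, ENNReal.ofReal (cascadeY X (wordPrefix x n) ω ^ α) ∂P =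
      (∫⁻ ω, ENNReal.ofReal (X₀ ω ^ α) ∂P) ^ n := by
  rw [← hM.lintegral_prod_wordPrefix (f := fun t ↦ ENNReal.ofReal (t ^ α)) (by fun_prop) x n]
  refine lintegral_congr fun ω ↦ ?_
  rw [cascadeY_wordPrefix, ← Real.finsetProd_rpow _ _ fun _ _ ↦ hM.nonneg _ _,
    ENNReal.ofReal_prod_of_nonneg fun _ _ ↦ Real.rpow_nonneg (hM.nonneg _ _) _]

lemma lintegral_cascadeY (hM : CascadeM1 P X X₀) (x : SymbSpace b) (n : ℕ) :
    ∫⁻ ω, ENNReal.ofReal (cascadeY X (wordPrefix x n) ω) ∂P = 1 := by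
  simpa only [Real.rpow_one, hM.lintegral_ofReal_eq_one, one_pow]
    using hM.lintegral_cascadeY_rpow x n 1

lemma setLIntegral_cascadeY_succ (hM : CascadeM1 P X X₀) (x : SymbSpace b) {n : ℕ} {A : Set Ω}
    (hA : MeasurableSet[cascadeFiltration hM.meas n] A) :
    ∫⁻ ω in A, ENNReal.ofReal (cascadeY X (wordPrefix x (n + 1)) ω) ∂P =
      ∫⁻ ω in A, ENNReal.ofReal (cascadeY X (wordPrefix x n) ω) ∂P := by
  have hF := (cascadeFiltration hM.meas).le n
  have hY : Measurable[cascadeFiltration hM.meas n] (A.indicator fun ω ↦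
      ENNReal.ofReal (cascadeY X (wordPrefix x n) ω)) :=
    (measurable_cascadeY fun v hv hvn ↦ measurable_cascadeFiltration hM.meas hv
      (hvn.trans_eq (length_wordPrefix x n))).ennreal_ofReal.indicator hA
  have hindep := hM.indep_cascadeFiltration
    (n.lt_succ_self.trans_eq (length_wordPrefix x (n + 1)).symm)
  have hmean : ∫⁻ ω, ENNReal.ofReal (X (wordPrefix x (n + 1)) ω) ∂P = 1 :=
    (((hM.ident _ (wordPrefix_succ_ne_nil x n)).comp ENNReal.measurable_ofReal).lintegral_eq).trans
      hM.lintegral_ofReal_eq_one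
  calc _ = ∫⁻ ω, A.indicator (fun ω ↦ ENNReal.ofReal (cascadeY X (wordPrefix x n) ω)) ω *
          ENNReal.ofReal (X (wordPrefix x (n + 1)) ω) ∂P := by
        rw [← lintegral_indicator (hF A hA)]
        refine lintegral_congr fun ω ↦ ?_
        by_cases hω : ω ∈ A <;>
          simp [hω, cascadeY_wordPrefix_succ, ENNReal.ofReal_mul (cascadeY_nonneg hM.nonneg _ _)]
    _ = _ := by
        rw [lintegral_mul_eq_lintegral_mul_lintegral_of_independent_measurableSpace hF
          (hM.meas _).comap_le hindep hY (comap_measurable _).ennreal_ofReal, hmean, mul_one,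
          lintegral_indicator (hF A hA)]

lemma setLIntegral_cascadeY_of_le (hM : CascadeM1 P X X₀) (x : SymbSpace b) {n N : ℕ}
    (hnN : n ≤ N) {A : Set Ω} (hA : MeasurableSet[cascadeFiltration hM.meas n] A) :
    ∫⁻ ω in A, ENNReal.ofReal (cascadeY X (wordPrefix x N) ω) ∂P =
      ∫⁻ ω in A, ENNReal.ofReal (cascadeY X (wordPrefix x n) ω) ∂P := by
  induction N, hnN using Nat.le_induction with
  | base => rfl
  | succ N hnN ih =>
    rw [hM.setLIntegral_cascadeY_succ x ((cascadeFiltration hM.meas).mono hnN A hA), ih]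

lemma measurable_cascadeFiltration_cascadeZ (hM : CascadeM1 P X X₀) (ν : Measure (SymbSpace b))
    (n : ℕ) : Measurable[cascadeFiltration hM.meas n] (cascadeZ X ν n) :=
  measurable_cascadeZ ν fun _ hv hvn ↦ measurable_cascadeFiltration hM.meas hv hvn

section Martingale

variable (ν : Measure (SymbSpace b)) [IsFiniteMeasure ν]

lemma eLpNorm_cascadeZ (hM : CascadeM1 P X X₀) (n : ℕ) :
    eLpNorm (cascadeZ X ν n) 1 P = ν univ := by
  simp_rw [eLpNorm_one_eq_lintegral_enorm, Real.enorm_eq_ofReal (cascadeZ_nonneg hM.nonneg ν n _),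
    _root_.lintegral_cascadeZ hM.meas hM.nonneg, hM.lintegral_cascadeY, lintegral_one]

lemma martingale_cascadeZ [IsFiniteMeasure P] (hM : CascadeM1 P X X₀) :
    Martingale (cascadeZ X ν) (cascadeFiltration hM.meas) P := by
  have hmeas (n : ℕ) : Measurable (cascadeZ X ν n) := measurable_cascadeZ ν fun v _ _ ↦ hM.meas v
  refine martingale_of_setIntegral_eq_succ
    (fun n ↦ (hM.measurable_cascadeFiltration_cascadeZ ν n).stronglyMeasurable)
    (fun n ↦ memLp_one_iff_integrable.1 ⟨(hmeas n).aestronglyMeasurable, ?_⟩) fun n A hA ↦ ?_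
  · exact hM.eLpNorm_cascadeZ ν n ▸ measure_lt_top ν univ
  · simp_rw [integral_eq_lintegral_of_nonneg_ae
        (ae_of_all _ (cascadeZ_nonneg hM.nonneg ν _)) (hmeas _).aestronglyMeasurable,
      lintegral_cascadeZ hM.meas hM.nonneg, hM.setLIntegral_cascadeY_succ _ hA]

lemma ae_exists_tendsto_cascadeZ [IsFiniteMeasure P] (hM : CascadeM1 P X X₀) :
    ∀ᵐ ω ∂P, ∃ c, Tendsto (fun n ↦ cascadeZ X ν n ω) atTop (nhds c) :=
  (hM.martingale_cascadeZ ν).submartingale.exists_ae_tendsto_of_bdd (R := (ν univ).toNNReal)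
    fun n ↦ by rw [hM.eLpNorm_cascadeZ ν n, ENNReal.coe_toNNReal (measure_ne_top ν univ)]

end Martingale

end CascadeM1

lemma le_rpow_one_sub_mul_rpow {y B α : ℝ} (hy : 0 ≤ y) (hyB : y ≤ B) (hα₀ : 0 ≤ α) (hα₁ : α ≤ 1) :
    y ≤ B ^ (1 - α) * y ^ α := by
  calc y = y ^ (1 - α) * y ^ α := by
        rw [← Real.rpow_add_of_nonneg hy (sub_nonneg.2 hα₁) hα₀, sub_add_cancel, Real.rpow_one]
    _ ≤ B ^ (1 - α) * y ^ α := mul_le_mul_of_nonneg_right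
        (Real.rpow_le_rpow hy hyB (sub_nonneg.2 hα₁)) (Real.rpow_nonneg hy α)

lemma div_rpow_le_mul_exp_pow {K c β a : ℝ} {n : ℕ} (hK : 0 ≤ K) (hβ : 0 ≤ β)
    (hc : Real.exp (-(n * a)) ≤ c) : (K / c) ^ β ≤ K ^ β * Real.exp (β * a) ^ n := by
  have hc₀ : 0 < c := (Real.exp_pos _).trans_le hc
  calc (K / c) ^ β ≤ (K / Real.exp (-(n * a))) ^ β := by gcongr
    _ = K ^ β * Real.exp (β * a) ^ n := by
        rw [Real.exp_neg, div_inv_eq_mul, Real.mul_rpow hK (Real.exp_pos _).le, ← Real.exp_mul,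
          ← Real.exp_nat_mul]
        ring_nf

lemma ae_liminf_eq_zero_of_tendsto_lintegral_zero {Ω : Type*} [MeasurableSpace Ω] {μ : Measure Ω}
    {f : ℕ → Ω → ℝ≥0∞} (hf : ∀ n, Measurable (f n))
    (h : Tendsto (fun n ↦ ∫⁻ ω, f n ω ∂μ) atTop (nhds 0)) :
    ∀ᵐ ω ∂μ, liminf (fun n ↦ f n ω) atTop = 0 := by
  have fatou := lintegral_liminf_le (μ := μ) (u := atTop) hf
  rw [h.liminf_eq, nonpos_iff_eq_zero] at fatou
  exact (lintegral_eq_zero_iff (Measurable.liminf hf)).1 fatou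

namespace CascadeM1

variable {b : ℕ} {Ω : Type*} [MeasurableSpace Ω] {P : Measure Ω}
  {X : List (Fin b) → Ω → ℝ} {X₀ : Ω → ℝ} {ν : Measure (SymbSpace b)}

lemma setLIntegral_cascadeY_le (hM : CascadeM1 P X X₀) {x : SymbSpace b} {n N : ℕ} (hnN : n ≤ N)
    {K α : ℝ} (hα₀ : 0 ≤ α) (hα₁ : α ≤ 1) (hν : 0 < (ν (cylinder (wordPrefix x n))).toReal) :
    ∫⁻ ω in {ω | cascadeZ X ν n ω ≤ K}, ENNReal.ofReal (cascadeY X (wordPrefix x N) ω) ∂P ≤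
      ENNReal.ofReal ((K / (ν (cylinder (wordPrefix x n))).toReal) ^ (1 - α)) *
        (∫⁻ ω, ENNReal.ofReal (X₀ ω ^ α) ∂P) ^ n := by
  set B := K / (ν (cylinder (wordPrefix x n))).toReal
  have hA : MeasurableSet[cascadeFiltration hM.meas n] {ω | cascadeZ X ν n ω ≤ K} :=
    measurableSet_le (hM.measurable_cascadeFiltration_cascadeZ ν n) measurable_const
  have hYB {ω : Ω} (hω : cascadeZ X ν n ω ≤ K) : cascadeY X (wordPrefix x n) ω ≤ B :=
    (le_div_iff₀ hν).2 ((cascadeY_mul_measure_le_cascadeZ hM.nonneg ν x n ω).trans hω)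
  calc _ = ∫⁻ ω in {ω | cascadeZ X ν n ω ≤ K},
          ENNReal.ofReal (cascadeY X (wordPrefix x n) ω) ∂P :=
        hM.setLIntegral_cascadeY_of_le x hnN hA
    _ ≤ ∫⁻ ω in {ω | cascadeZ X ν n ω ≤ K},
          ENNReal.ofReal (B ^ (1 - α)) * ENNReal.ofReal (cascadeY X (wordPrefix x n) ω ^ α) ∂P := by
        refine setLIntegral_mono' ((cascadeFiltration hM.meas).le n _ hA) fun ω hω ↦ ?_
        have hY := cascadeY_nonneg hM.nonneg (wordPrefix x n) ω
        rw [← ENNReal.ofReal_mul' (Real.rpow_nonneg hY α)]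
        exact ENNReal.ofReal_le_ofReal (le_rpow_one_sub_mul_rpow hY (hYB hω) hα₀ hα₁)
    _ ≤ ∫⁻ ω, ENNReal.ofReal (B ^ (1 - α)) *
          ENNReal.ofReal (cascadeY X (wordPrefix x n) ω ^ α) ∂P := setLIntegral_le_lintegral _ _
    _ = _ := by
        rw [lintegral_const_mul' _ _ ENNReal.ofReal_ne_top, hM.lintegral_cascadeY_rpow]

variable [IsProbabilityMeasure P] [IsFiniteMeasure ν]

lemma tendsto_setLIntegral_cascadeY (hM : CascadeM1 P X X₀) {x : SymbSpace b}
    (hν : ∀ n, ν (cylinder (wordPrefix x n)) ≠ 0) (hx : lowerLocalDim ν x < entropyX P X₀)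
    {K : ℝ} (hK : 0 ≤ K) :
    Tendsto (fun N ↦ ∫⁻ ω in {ω | ∀ n, cascadeZ X ν n ω ≤ K},
      ENNReal.ofReal (cascadeY X (wordPrefix x N) ω) ∂P) atTop (nhds 0) := by
  obtain ⟨a, hxa, ha⟩ := ENNReal.lt_iff_exists_nnreal_btwn.1 hx
  obtain ⟨α, hα₀, hα₁, hmoment⟩ :=
    exists_lintegral_rpow_lt_exp hM.meas₀ hM.nonneg₀ hM.lintegral_ofReal_eq_one ha
  set q := ENNReal.ofReal (Real.exp ((1 - α) * a)) * ∫⁻ ω, ENNReal.ofReal (X₀ ω ^ α) ∂P with hq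
  have hq_lt : q < 1 := by
    refine (ENNReal.mul_lt_mul_right (ENNReal.ofReal_pos.2 (Real.exp_pos _)).ne'
      ENNReal.ofReal_ne_top hmoment).trans_eq ?_
    rw [← ENNReal.ofReal_mul (Real.exp_pos _).le, ← Real.exp_add, add_neg_cancel, Real.exp_zero,
      ENNReal.ofReal_one]
  have hgeom : Tendsto (fun n ↦ ENNReal.ofReal (K ^ (1 - α)) * q ^ n) atTop (nhds 0) := by
    simpa only [mul_zero] using ENNReal.Tendsto.const_mul
      (ENNReal.tendsto_pow_atTop_nhds_zero_of_lt_one hq_lt) (.inr ENNReal.ofReal_ne_top)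
  refine ENNReal.tendsto_nhds_zero.2 fun ε hε ↦ ?_
  obtain ⟨n, hn, hnε⟩ := ((frequently_exp_lt_measure_cylinder hν hxa).and_eventually
    (ENNReal.tendsto_nhds_zero.1 hgeom ε hε)).exists
  filter_upwards [eventually_ge_atTop n] with N hnN
  calc _ ≤ ∫⁻ ω in {ω | cascadeZ X ν n ω ≤ K},
          ENNReal.ofReal (cascadeY X (wordPrefix x N) ω) ∂P :=
        lintegral_mono_set fun ω (hω : ∀ n, cascadeZ X ν n ω ≤ K) ↦ hω n
    _ ≤ ENNReal.ofReal ((K / (ν (cylinder (wordPrefix x n))).toReal) ^ (1 - α)) *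
          (∫⁻ ω, ENNReal.ofReal (X₀ ω ^ α) ∂P) ^ n :=
        hM.setLIntegral_cascadeY_le hnN hα₀.le hα₁.le ((Real.exp_pos _).trans hn)
    _ ≤ ENNReal.ofReal (K ^ (1 - α) * Real.exp ((1 - α) * a) ^ n) *
          (∫⁻ ω, ENNReal.ofReal (X₀ ω ^ α) ∂P) ^ n := by
        gcongr
        exact div_rpow_le_mul_exp_pow hK (sub_nonneg.2 hα₁.le) hn.le
    _ = ENNReal.ofReal (K ^ (1 - α)) * q ^ n := by
        rw [ENNReal.ofReal_mul (Real.rpow_nonneg hK _), ENNReal.ofReal_pow (Real.exp_pos _).le, hq,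
          mul_pow, mul_assoc]
    _ ≤ ε := hnε

lemma tendsto_setLIntegral_cascadeZ (hM : CascadeM1 P X X₀)
    (hdim : ∀ᵐ x ∂ν, lowerLocalDim ν x < entropyX P X₀) {K : ℝ} (hK : 0 ≤ K) :
    Tendsto (fun N ↦ ∫⁻ ω in {ω | ∀ n, cascadeZ X ν n ω ≤ K},
      ENNReal.ofReal (cascadeZ X ν N ω) ∂P) atTop (nhds 0) := by
  simp_rw [lintegral_cascadeZ hM.meas hM.nonneg ν]
  rw [← lintegral_zero (μ := ν)]
  refine tendsto_lintegral_of_dominated_convergence (fun _ ↦ 1)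
    (fun N ↦ measurable_comp_wordPrefix (fun w ↦ ∫⁻ ω in _, ENNReal.ofReal (cascadeY X w ω) ∂P) N)
    (fun N ↦ ae_of_all _ fun x ↦ ?_) (by simp) ?_
  · exact (setLIntegral_le_lintegral _ _).trans (hM.lintegral_cascadeY x N).le
  · filter_upwards [hdim, ae_measure_cylinder_wordPrefix_ne_zero ν] with x hx hν
    exact hM.tendsto_setLIntegral_cascadeY hν hx hK

lemma ae_liminf_cascadeZ_eq_zero_of_forall_le (hM : CascadeM1 P X X₀)
    (hdim : ∀ᵐ x ∂ν, lowerLocalDim ν x < entropyX P X₀) {K : ℝ} (hK : 0 ≤ K) :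
    ∀ᵐ ω ∂P, (∀ n, cascadeZ X ν n ω ≤ K) →
      liminf (fun n ↦ ENNReal.ofReal (cascadeZ X ν n ω)) atTop = 0 := by
  have hZ (n : ℕ) : Measurable (cascadeZ X ν n) := measurable_cascadeZ ν fun v _ _ ↦ hM.meas v
  have hA : MeasurableSet {ω | ∀ n, cascadeZ X ν n ω ≤ K} := by
    rw [Set.ofPred_forall]
    exact MeasurableSet.iInter fun n ↦ measurableSet_le (hZ n) measurable_const
  exact (ae_restrict_iff' hA).1 <| ae_liminf_eq_zero_of_tendsto_lintegral_zero
    (fun n ↦ (hZ n).ennreal_ofReal) (hM.tendsto_setLIntegral_cascadeZ hdim hK)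

end CascadeM1

theorem singular_of_lowerLocalDim_lt_entropy_general {b : ℕ} {Ω : Type*} [MeasurableSpace Ω]
    {P : Measure Ω} [IsProbabilityMeasure P] {X : List (Fin b) → Ω → ℝ} {X₀ : Ω → ℝ}
    (hM : CascadeM1 P X X₀) {ν : Measure (SymbSpace b)} [IsFiniteMeasure ν]
    (hdim : ∀ᵐ x ∂ν, lowerLocalDim ν x < entropyX P X₀) :
    ∀ᵐ ω ∂P, Tendsto (fun n ↦ cascadeZ X ν n ω) atTop (nhds 0) := by
  have hliminf : ∀ᵐ ω ∂P, ∀ K : ℕ, (∀ n, cascadeZ X ν n ω ≤ K) →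
      liminf (fun n ↦ ENNReal.ofReal (cascadeZ X ν n ω)) atTop = 0 :=
    ae_all_iff.2 fun K ↦ hM.ae_liminf_cascadeZ_eq_zero_of_forall_le hdim K.cast_nonneg
  filter_upwards [hliminf, hM.ae_exists_tendsto_cascadeZ ν] with ω hω ⟨c, hc⟩
  obtain ⟨B, hB⟩ := hc.bddAbove_range
  obtain ⟨K, hBK⟩ := exists_nat_ge B
  have hc_nonpos : c ≤ 0 := ENNReal.ofReal_eq_zero.1 <|
    (ENNReal.tendsto_ofReal hc).liminf_eq.symm.trans
      (hω K fun n ↦ (hB (mem_range_self n)).trans hBK)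
  have hc_nonneg : 0 ≤ c := ge_of_tendsto' hc fun n ↦ cascadeZ_nonneg hM.nonneg ν n ω
  rwa [hc_nonpos.antisymm hc_nonneg] at hc

/-- **Theorem (sufficient condition for `Q`-singularity).** Let `Q` be a Mandelbrot
multiplicative cascade (assumption (M1)) acting on a Borel probability measure `ν` on the
symbolic space `Σ`. If for `ν`-almost every `x` the lower local dimension of `ν` at `x` is
strictly less than `h_X`, then `ν` is `Q`-singular, i.e. `Z_n → 0` almost surely. In
particular this holds if the upper Hausdorff dimension of `ν` is strictly less than `h_X`. -/
theorem singular_of_lowerLocalDim_lt_entropy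
    {b : ℕ} (hb : 2 ≤ b)
    {Ω : Type*} [MeasurableSpace Ω] (P : Measure Ω) [IsProbabilityMeasure P]
    (X : List (Fin b) → Ω → ℝ) (X₀ : Ω → ℝ)
    (hM1 : CascadeM1 P X X₀)
    (ν : Measure (SymbSpace b)) [IsProbabilityMeasure ν] :
    ((∀ᵐ x ∂ν, lowerLocalDim ν x < entropyX P X₀) →
      ∀ᵐ ω ∂P, Tendsto (fun n => cascadeZ X ν n ω) atTop (nhds 0)) ∧
    (upperHausdorffDim ν < entropyX P X₀ →
      ∀ᵐ ω ∂P, Tendsto (fun n => cascadeZ X ν n ω) atTop (nhds 0)) := by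
  exact ⟨singular_of_lowerLocalDim_lt_entropy_general hM1,
    fun h ↦ singular_of_lowerLocalDim_lt_entropy_general hM1 (ae_lt_of_essSup_lt h)⟩

end
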